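/- There exists a Borel probability measure W on C (the Wiener measure) such that for every p ≥ 1 and all real numbers 0 < u_1 < u_2 < … < u_p ≤ 1, the pushforward of W under the map x ↦ (x(u_1), …, x(u_p)) is the centered Gaussian measure on ℝ^p with covariance matrix (min(u_j, u_r))_{1≤j,r≤p}, i.e., the measure with density u ↦ ((2π)^p det M)^{−1/2} exp(−⟨u, M^{−1} u⟩/2) with respect to Lebesgue measure, where M_{j,r} = min(u_j, u_r). -/

import Mathlib

open MeasureTheory Matrix Set Filter Topology
open scoped ENNReal

noncomputable section

/-- The space `C` of continuous functions on `[0,1]` vanishing at `0`,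
with the supremum metric (inherited from `C([0,1], ℝ)`). -/
abbrev Cz : Type := {f : C(Set.Icc (0:ℝ) 1, ℝ) // f ⟨0, ⟨le_refl 0, zero_le_one⟩⟩ = 0}

/-- The projection `π_n : C → ℝ^n`, `x ↦ (x(t_1), …, x(t_n))`. -/
def proj (t : ℕ → ℝ) (ht : ∀ k, t k ∈ Set.Ioc (0:ℝ) 1) (n : ℕ) (x : Cz) : Fin n → ℝ :=
  fun i => (x : C(Set.Icc (0:ℝ) 1, ℝ)) ⟨t i, Set.Ioc_subset_Icc_self (ht i)⟩

/-- The covariance matrix `M_n` with entries `min (t j) (t r)`. -/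
def covM (t : ℕ → ℝ) (n : ℕ) : Matrix (Fin n) (Fin n) ℝ :=
  Matrix.of fun j r => min (t (j : ℕ)) (t (r : ℕ))

/-- The centered Gaussian measure on `ℝ^n` with (positive definite) covariance matrix `M`:
the measure with density `u ↦ ((2π)^n det M)^{-1/2} exp (-⟨u, M⁻¹ u⟩ / 2)` w.r.t. Lebesgue
measure. -/
def gauss (n : ℕ) (M : Matrix (Fin n) (Fin n) ℝ) : Measure (Fin n → ℝ) :=
  volume.withDensity fun u =>
    ENNReal.ofReal ((((2 * Real.pi) ^ n * M.det) ^ (-(1:ℝ)/2 : ℝ)) *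
      Real.exp (-(u ⬝ᵥ M⁻¹.mulVec u) / 2))

/-- `φ(K) = inf_{n ≥ 1} ν_n (π_n(K))`. -/
def phi (t : ℕ → ℝ) (ht : ∀ k, t k ∈ Set.Ioc (0:ℝ) 1) (K : Set Cz) : ℝ≥0∞ :=
  ⨅ n : ℕ, gauss (n+1) (covM t (n+1)) (proj t ht (n+1) '' K)

/-- `μ(A) = sup {φ(K) : K ⊆ A, K compact}`. -/
def mu (t : ℕ → ℝ) (ht : ∀ k, t k ∈ Set.Ioc (0:ℝ) 1) (A : Set Cz) : ℝ≥0∞ :=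
  ⨆ (K : Set Cz) (_ : K ⊆ A) (_ : IsCompact K), phi t ht K

instance : MeasurableSpace Cz := borel Cz
instance : BorelSpace Cz := ⟨rfl⟩


open ProbabilityTheory in
lemma wm_gaussPi (n : ℕ) : Measure.pi (fun _ : Fin n => gaussianReal 0 1) =
    volume.withDensity (fun x => ENNReal.ofReal (∏ i, gaussianPDFReal 0 1 (x i))) := by
  refine Measure.pi_eq fun s hs => ?_
  have hm : MeasurableSet (Set.pi Set.univ s) := MeasurableSet.univ_pi hs
  have hint : ∀ i, Integrable (gaussianPDFReal 0 1) (volume.restrict (s i)) := fun i =>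
    (integrable_gaussianPDFReal 0 1).restrict
  rw [withDensity_apply _ hm, volume_pi, Measure.restrict_pi_pi,
    ← ofReal_integral_eq_lintegral_ofReal]
  · rw [integral_fintype_prod_eq_prod (f := fun _ x => gaussianPDFReal 0 1 x),
      ENNReal.ofReal_prod_of_nonneg]
    · refine Finset.prod_congr rfl fun i _ => ?_
      rw [gaussianReal_apply_eq_integral _ (by norm_num)]
    · intro i _
      exact integral_nonneg fun x => gaussianPDFReal_nonneg _ _ _
  · exact Integrable.fintype_prod hint
  · exact Eventually.of_forall fun x => Finset.prod_nonneg fun i _ => gaussianPDFReal_nonneg _ _ _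

open ProbabilityTheory in
lemma wm_gauss_map (n : ℕ) (A : Matrix (Fin n) (Fin n) ℝ) (hA : A.det ≠ 0) :
    gauss n (A * Aᵀ) = (Measure.pi (fun _ : Fin n => gaussianReal 0 1)).map (fun x => A.mulVec x) := by
  have hAm : Measurable (fun x : Fin n → ℝ => A.mulVec x) := by
    have : Continuous (fun x : Fin n → ℝ => A.mulVec x) := by fun_prop
    exact this.measurable
  have hvol : (volume : Measure (Fin n → ℝ)) =
      ENNReal.ofReal |A.det| • (volume.map (fun x => A.mulVec x)) := by
    have h := Real.map_matrix_volume_pi_eq_smul_volume_pi hA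
    have h2 : (⇑(toLin' A)) = fun x => A.mulVec x := by ext x; simp
    rw [h2] at h
    rw [h, smul_smul, ← ENNReal.ofReal_mul (abs_nonneg _), abs_inv,
      mul_inv_cancel₀ (abs_ne_zero.2 hA)]
    simp
  have hD : Measurable fun u : Fin n → ℝ =>
    ENNReal.ofReal ((((2 * Real.pi) ^ n * (A * Aᵀ).det) ^ (-(1:ℝ)/2 : ℝ)) *
      Real.exp (-(u ⬝ᵥ (A * Aᵀ)⁻¹.mulVec u) / 2)) := by
    apply Measurable.ennreal_ofReal
    apply Continuous.measurable
    fun_prop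
  ext s hs
  rw [Measure.map_apply hAm hs, wm_gaussPi, withDensity_apply _ (hAm hs), gauss,
    withDensity_apply _ hs]
  conv_lhs => rw [hvol]
  rw [Measure.restrict_smul, lintegral_smul_measure, setLIntegral_map hs hD hAm, smul_eq_mul,
    ← lintegral_const_mul]
  swap
  · exact hD.comp hAm
  congr 1
  ext x
  rw [← ENNReal.ofReal_mul (abs_nonneg _)]
  congr 1
  have hu : IsUnit A.det := isUnit_iff_ne_zero.2 hA
  have hq : (A *ᵥ x) ⬝ᵥ (A * Aᵀ)⁻¹ *ᵥ (A *ᵥ x) = ∑ i, x i ^ 2 := by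
    rw [Matrix.mul_inv_rev, Matrix.mulVec_mulVec, Matrix.mul_assoc, Matrix.nonsing_inv_mul _ hu,
      Matrix.mul_one, ← Matrix.transpose_nonsing_inv, Matrix.mulVec_transpose,
      dotProduct_comm, ← Matrix.dotProduct_mulVec, Matrix.mulVec_mulVec,
      Matrix.nonsing_inv_mul _ hu, Matrix.one_mulVec]
    simp [dotProduct, pow_two]
  rw [hq]
  simp only [gaussianPDFReal]
  rw [Finset.prod_mul_distrib, ← Real.exp_sum]
  have h1 : Matrix.det (A * Aᵀ) = |A.det| ^ 2 := by
    rw [Matrix.det_mul, Matrix.det_transpose, sq_abs, pow_two]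
  have h2 : ((2 * Real.pi) ^ n * (A * Aᵀ).det) ^ (-(1:ℝ)/2 : ℝ) =
     (√(2 * Real.pi))⁻¹ ^ n * |A.det|⁻¹ := by
    have hp : 0 ≤ 2 * Real.pi := by positivity
    rw [h1, neg_div, Real.rpow_neg (by positivity), ← Real.sqrt_eq_rpow,
      Real.sqrt_mul (by positivity), Real.sqrt_sq (abs_nonneg _), mul_inv, inv_pow]
    congr 2
    rw [Real.sqrt_eq_iff_mul_self_eq (by positivity) (by positivity), ← mul_pow,
      Real.mul_self_sqrt hp]
  rw [h2]
  have h3 : |A.det| ≠ 0 := abs_ne_zero.2 hA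
  simp only [NNReal.coe_one, mul_one, sub_zero, Finset.prod_const, Finset.card_univ,
    Fintype.card_fin, neg_div, Finset.sum_neg_distrib, Finset.sum_div]
  field_simp

lemma wm_factor (p : ℕ) (u : Fin p → ℝ) (hu : StrictMono u) (h0 : ∀ j, 0 < u j) :
    ∃ A : Matrix (Fin p) (Fin p) ℝ, A.det ≠ 0 ∧ A * Aᵀ = Matrix.of fun j r => min (u j) (u r) := by
  let v : ℕ → ℝ := fun k => match k with
    | 0 => 0
    | k+1 => if h : k < p then u ⟨k, h⟩ else 0
  have hv : ∀ i : Fin p, v (i+1) = u i := fun i => by simp [v]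
  have hpos : ∀ i : Fin p, 0 < v (i+1) - v i := by
    rintro ⟨i, hi⟩
    rcases i with _ | i
    · simpa [v, hi] using h0 _
    · have : i < p := by omega
      simp only [v, hi, this, dif_pos, sub_pos]
      exact hu (by simp)
  let A : Matrix (Fin p) (Fin p) ℝ := Matrix.of fun j i => if i ≤ j then √(v (i+1) - v i) else 0
  refine ⟨A, ?_, ?_⟩
  · have ht : A.BlockTriangular OrderDual.toDual := by
      intro i j hij
      have : ¬ j ≤ i := not_le.2 (by simpa using hij)
      simp [A, this]
    rw [Matrix.det_of_isLowerTriangular A ht]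
    refine Finset.prod_ne_zero_iff.2 fun i _ => ?_
    simpa [A] using (Real.sqrt_pos.2 (hpos i)).ne'
  · ext j r
    have key : ∀ m : Fin p, ∑ i : Fin p, (if i ≤ m then v (i+1) - v i else 0) = u m := by
      intro m
      simp only [Fin.le_def]
      rw [Fin.sum_univ_eq_sum_range (fun i => if i ≤ (m:ℕ) then v (i+1) - v i else 0) p,
        ← Finset.sum_filter]
      have : Finset.filter (fun i => i ≤ (m:ℕ)) (Finset.range p) = Finset.range (m+1) := by
        ext i; simp; omega
      rw [this, Finset.sum_range_sub, hv]; simp [v]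
    rw [Matrix.mul_apply, Matrix.of_apply, ← hu.monotone.map_min, ← key]
    refine Finset.sum_congr rfl fun i _ => ?_
    simp only [A, Matrix.transpose_apply, Matrix.of_apply, le_min_iff]
    have := Real.mul_self_sqrt (hpos i).le
    by_cases h1 : i ≤ j <;> by_cases h2 : i ≤ r <;> simp [h1, h2, this]

/-- tent function -/
def wmD (x : ℝ) : ℝ := max 0 (min x (1 - x))

/-- clamped bridge kernel -/
def wmB (s t : ℝ) : ℝ :=
  min (max 0 (min s 1)) (max 0 (min t 1)) - max 0 (min s 1) * max 0 (min t 1)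

lemma wmD_nonneg (x : ℝ) : 0 ≤ wmD x := le_max_left _ _

lemma wmD_le (x : ℝ) : wmD x ≤ 1 := by
  unfold wmD; grind

lemma wmD_zero {x : ℝ} (h : x ≤ 0 ∨ 1 ≤ x) : wmD x = 0 := by
  unfold wmD; grind

lemma wmB_nonneg (s t : ℝ) : 0 ≤ wmB s t := by
  unfold wmB
  have h1 : 0 ≤ max 0 (min s 1) := le_max_left _ _
  have h2 : 0 ≤ max 0 (min t 1) := le_max_left _ _
  have h3 : max 0 (min s 1) ≤ 1 := by grind
  have h4 : max 0 (min t 1) ≤ 1 := by grind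
  generalize max 0 (min s 1) = a at *
  generalize max 0 (min t 1) = b at *
  rcases le_total a b with h | h
  · rw [min_eq_left h]; nlinarith
  · rw [min_eq_right h]; nlinarith

lemma wmB_le (s t : ℝ) : wmB s t ≤ wmD s := by
  unfold wmB
  have h1 : 0 ≤ max 0 (min s 1) := le_max_left _ _
  have h2 : 0 ≤ max 0 (min t 1) := le_max_left _ _
  have h3 : max 0 (min s 1) ≤ 1 := by grind
  have h4 : max 0 (min t 1) ≤ 1 := by grind
  have h5 : wmD s = min (max 0 (min s 1)) (1 - max 0 (min s 1)) := by unfold wmD; grind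
  rw [h5]
  generalize max 0 (min s 1) = a at *
  generalize max 0 (min t 1) = b at *
  rcases le_total a b with h | h
  · rw [min_eq_left h]; apply le_min <;> nlinarith
  · rw [min_eq_right h]; apply le_min <;> nlinarith

lemma wmB_half (s t : ℝ) :
    wmB s t = wmD s * wmD t + (1/2) * wmB (2*s) (2*t) + (1/2) * wmB (2*s-1) (2*t-1) := by
  wlog hst : s ≤ t generalizing s t
  · have := this t s (le_of_not_ge hst)
    have hc : ∀ a b, wmB a b = wmB b a := fun a b => by unfold wmB; rw [min_comm, mul_comm]
    rw [hc s t, this, hc (2*t), hc (2*t-1)]; ring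
  unfold wmB wmD
  have c1 : ∀ x : ℝ, x ≤ 0 → max 0 (min x 1) = 0 := fun x hx => by grind
  have c2 : ∀ x : ℝ, 0 ≤ x → x ≤ 1 → max 0 (min x 1) = x := fun x hx hx' => by grind
  have c3 : ∀ x : ℝ, 1 ≤ x → max 0 (min x 1) = 1 := fun x hx => by grind
  have d1 : ∀ x : ℝ, x ≤ 0 → max 0 (min x (1 - x)) = 0 := fun x hx => by grind
  have d2 : ∀ x : ℝ, 0 ≤ x → x ≤ 1/2 → max 0 (min x (1-x)) = x := fun x hx hx' => by grind
  have d3 : ∀ x : ℝ, 1/2 ≤ x → x ≤ 1 → max 0 (min x (1-x)) = 1 - x := fun x hx hx' => by grind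
  have d4 : ∀ x : ℝ, 1 ≤ x → max 0 (min x (1-x)) = 0 := fun x hx => by grind
  have H : ∀ x : ℝ, x ≤ 0 ∨ (0 ≤ x ∧ x ≤ 1/2) ∨ (1/2 ≤ x ∧ x ≤ 1) ∨ 1 ≤ x := fun x => by grind
  rcases H s with h | ⟨h, h'⟩ | ⟨h, h'⟩ | h
  · rw [c1 s h, d1 s h, c1 (2*s) (by linarith), c1 (2*s-1) (by linarith)]
    simp
  · rw [c2 s h (by linarith), d2 s h h', c2 (2*s) (by linarith) (by linarith),
      c1 (2*s-1) (by linarith)]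
    rcases H t with k | ⟨k, k'⟩ | ⟨k, k'⟩ | k
    · have : s = 0 := by linarith
      subst this
      simp
    · rw [c2 t k (by linarith), d2 t k k', c2 (2*t) (by linarith) (by linarith),
        c1 (2*t-1) (by linarith), min_eq_left hst, min_eq_left (by linarith)]
      simp; ring
    · rw [c2 t (by linarith) (by linarith), d3 t k k', c3 (2*t) (by linarith),
        c2 (2*t-1) (by linarith) (by linarith), min_eq_left hst, min_eq_left (by linarith),
        min_eq_left (by linarith)]
      ring
    · rw [c3 t k, d4 t k, c3 (2*t) (by linarith),
        c3 (2*t-1) (by linarith), min_eq_left (by linarith), min_eq_left (by linarith)]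
      simp
  · rw [c2 s (by linarith) (by linarith), d3 s h h', c3 (2*s) (by linarith),
      c2 (2*s-1) (by linarith) (by linarith)]
    rcases H t with k | ⟨k, k'⟩ | ⟨k, k'⟩ | k
    · linarith
    · have : s = 1/2 := by linarith
      have : t = 1/2 := by linarith
      subst s t
      norm_num
    · rw [c2 t (by linarith) (by linarith), d3 t k k', c3 (2*t) (by linarith),
        c2 (2*t-1) (by linarith) (by linarith), min_eq_left hst, min_eq_left le_rfl,
        min_eq_left (by linarith)]
      ring
    · rw [c3 t k, d4 t k, c3 (2*t) (by linarith),
        c3 (2*t-1) (by linarith), min_eq_left (by linarith), min_eq_left (by linarith),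
        min_eq_left (by linarith)]
      ring
  · rw [c3 s h, c3 (2*s) (by linarith), c3 (2*s-1) (by linarith), d4 s h,
      c3 t (by linarith), c3 (2*t) (by linarith), c3 (2*t-1) (by linarith)]
    simp

lemma wm_sum_tent (n : ℕ) (x : ℝ) : ∑ k ∈ Finset.range n, wmD (x - k) ≤ 1 := by
  by_cases h : ∃ k ∈ Finset.range n, wmD (x - k) ≠ 0
  · obtain ⟨k, hk, hne⟩ := h
    rw [Finset.sum_eq_single_of_mem k hk]
    · exact wmD_le _
    · intro j _ hj
      by_contra hne'
      have a1 : 0 < x - k ∧ x - k < 1 := by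
        constructor <;> by_contra hh
        · exact hne (wmD_zero (Or.inl (not_lt.1 hh)))
        · exact hne (wmD_zero (Or.inr (not_lt.1 hh)))
      have a2 : 0 < x - j ∧ x - j < 1 := by
        constructor <;> by_contra hh
        · exact hne' (wmD_zero (Or.inl (not_lt.1 hh)))
        · exact hne' (wmD_zero (Or.inr (not_lt.1 hh)))
      have b1 : (k:ℝ) < j + 1 := by linarith
      have b2 : (j:ℝ) < k + 1 := by linarith
      norm_cast at b1 b2
      omega
  · push Not at h
    rw [Finset.sum_eq_zero h]; norm_num

lemma wm_sum_double (f : ℕ → ℝ) (n : ℕ) :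
    ∑ k ∈ Finset.range (2 * n), f k = ∑ k ∈ Finset.range n, (f (2*k) + f (2*k+1)) := by
  induction n with
  | zero => simp
  | succ n ih => rw [Finset.sum_range_succ, ← ih, show 2*(n+1) = 2*n+1+1 by ring,
      Finset.sum_range_succ, Finset.sum_range_succ]; ring

lemma wmB_expand (N : ℕ) (s t : ℝ) :
    wmB s t = ∑ m ∈ Finset.range N, ∑ k ∈ Finset.range (2^m),
        (1/2)^m * (wmD (2^m * s - k) * wmD (2^m * t - k))
      + (1/2)^N * ∑ k ∈ Finset.range (2^N), wmB (2^N * s - k) (2^N * t - k) := by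
  induction N with
  | zero => simp
  | succ N ih =>
    rw [Finset.sum_range_succ, ih, add_assoc]
    congr 1
    rw [pow_succ' 2 N, wm_sum_double, ← Finset.mul_sum]
    rw [pow_succ, mul_assoc, ← mul_add]
    congr 1
    rw [Finset.mul_sum, ← Finset.sum_add_distrib]
    refine Finset.sum_congr rfl fun k _ => ?_
    rw [wmB_half]
    push_cast
    ring_nf

lemma wmB_tendsto (s t : ℝ) :
    Tendsto (fun N => ∑ m ∈ Finset.range N, ∑ k ∈ Finset.range (2^m),
        (1/2:ℝ)^m * (wmD (2^m * s - k) * wmD (2^m * t - k))) atTop (𝓝 (wmB s t)) := by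
  have h : Tendsto (fun N : ℕ => (1/2:ℝ)^N * ∑ k ∈ Finset.range (2^N),
      wmB (2^N * s - k) (2^N * t - k)) atTop (𝓝 0) := by
    refine squeeze_zero (g := fun N => (1/2:ℝ)^N) (fun N => ?_) (fun N => ?_)
      (tendsto_pow_atTop_nhds_zero_of_lt_one (by norm_num) (by norm_num))
    · exact mul_nonneg (by positivity) (Finset.sum_nonneg fun k _ => wmB_nonneg _ _)
    · refine mul_le_of_le_one_right (by positivity) ?_
      exact (Finset.sum_le_sum fun k _ => wmB_le _ _).trans (wm_sum_tent _ _)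
  have h2 := (tendsto_const_nhds (x := wmB s t)).sub h
  rw [sub_zero] at h2
  refine h2.congr fun N => ?_
  rw [wmB_expand N s t]; ring

abbrev WmI : Type := Σ _ : ℕ, ℕ

open ProbabilityTheory in
/-- product of standard Gaussians -/
def wmP (ι : Type) : Measure (ι → ℝ) := Measure.infinitePi (fun _ : ι => gaussianReal 0 1)

instance (ι : Type) : IsProbabilityMeasure (wmP ι) := by unfold wmP; infer_instance

open ProbabilityTheory in
lemma wm_map_eval (ι : Type) (i : ι) : (wmP ι).map (fun ω => ω i) = gaussianReal 0 1 :=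
  Measure.infinitePi_map_eval (fun _ : ι => gaussianReal 0 1) i

open ProbabilityTheory in
lemma wm_charFun (ι : Type) (s : Finset ι) (c : ι → ℝ) :
    ∫ ω, Complex.exp (((∑ i ∈ s, ω i * c i : ℝ) : ℂ) * Complex.I) ∂(wmP ι) =
      Complex.exp (((-(∑ i ∈ s, c i ^ 2) / 2 : ℝ) : ℂ)) := by
  have hind : iIndepFun (fun i (ω : ι → ℝ) => ω i * c i) (wmP ι) :=
    iIndepFun_infinitePi (X := fun i x => x * c i) (fun i => by fun_prop)
  have hme : ∀ i ∈ s, AEMeasurable (fun ω : ι → ℝ => ω i * c i) (wmP ι) := fun i _ => by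
    have : Measurable (fun ω : ι → ℝ => ω i * c i) := by fun_prop
    exact this.aemeasurable
  have h := iIndepFun.charFun_map_fun_finsetSum_eq_prod (s := s)
    (X := fun i (ω : ι → ℝ) => ω i * c i) (P := wmP ι)
    hme (hind.restrict s)
  have h1 := congrFun h 1
  rw [charFun_apply_real, integral_map (by fun_prop) (by fun_prop)] at h1
  simp only [Complex.ofReal_one, one_mul] at h1
  rw [h1, Finset.prod_apply]
  have h2 : ∀ i, charFun ((wmP ι).map (fun ω => ω i * c i)) 1 = Complex.exp (((-(c i ^ 2) / 2 : ℝ) : ℂ)) := by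
    intro i
    have : (wmP ι).map (fun ω => ω i * c i) = (gaussianReal 0 1).map (fun x => x * c i) := by
      rw [← wm_map_eval ι i, Measure.map_map (by fun_prop) (by fun_prop)]; rfl
    rw [this, gaussianReal_map_mul_const, charFun_gaussianReal]
    congr 1
    simp
    ring
  rw [Finset.prod_congr rfl fun i _ => h2 i, ← Complex.exp_sum]
  congr 1
  push_cast
  rw [← Finset.sum_neg_distrib, Finset.sum_div]

/-- Schauder functions -/
def wmG : ℕ → ℕ → C(Set.Icc (0:ℝ) 1, ℝ)
  | 0, _ => ⟨fun t => t.1, by fun_prop⟩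
  | m+1, k => ⟨fun t => √(1/2) ^ m * wmD (2^m * t.1 - k), by unfold wmD; fun_prop⟩

def wmL (m : ℕ) (ω : WmI → ℝ) : C(Set.Icc (0:ℝ) 1, ℝ) :=
  ∑ k ∈ Finset.range (2^(m-1)), ω ⟨m, k⟩ • wmG m k

def wmS (N : ℕ) (ω : WmI → ℝ) : C(Set.Icc (0:ℝ) 1, ℝ) := ∑ m ∈ Finset.range N, wmL m ω

lemma wmS_apply (N : ℕ) (ω : WmI → ℝ) (t : Set.Icc (0:ℝ) 1) :
    wmS N ω t = ∑ i ∈ (Finset.range N).sigma (fun m => Finset.range (2^(m-1))),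
      ω i * wmG i.1 i.2 t := by
  rw [Finset.sum_sigma]
  simp [wmS, wmL, ContinuousMap.sum_apply]

lemma wmS_zero (N : ℕ) (ω : WmI → ℝ) : wmS N ω ⟨0, ⟨le_refl 0, zero_le_one⟩⟩ = 0 := by
  rw [wmS_apply]
  refine Finset.sum_eq_zero fun i _ => ?_
  rcases i with ⟨_ | m, k⟩
  · simp [wmG]
  · simp only [wmG, ContinuousMap.coe_mk]
    rw [wmD_zero (Or.inl (by simp))]; simp

lemma wmS_cont (N : ℕ) : Continuous (wmS N) := by
  unfold wmS wmL; fun_prop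

lemma wmL_norm (m : ℕ) (ω : WmI → ℝ) (C : ℝ) (hC : 0 ≤ C)
    (h : ∀ k ∈ Finset.range (2^m), |ω ⟨m+1, k⟩| ≤ C) : ‖wmL (m+1) ω‖ ≤ C * √(1/2) ^ m := by
  rw [ContinuousMap.norm_le _ (by positivity)]
  intro t
  simp only [wmL, ContinuousMap.sum_apply, ContinuousMap.smul_apply, wmG, ContinuousMap.coe_mk,
    Nat.add_sub_cancel, smul_eq_mul, Real.norm_eq_abs]
  calc _ ≤ ∑ k ∈ Finset.range (2^m), C * √(1/2) ^ m * wmD (2^m * t.1 - k) := by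
        refine (Finset.abs_sum_le_sum_abs _ _).trans (Finset.sum_le_sum fun k hk => ?_)
        rw [abs_mul, abs_of_nonneg (a := √(1/2) ^ m * wmD (2^m * t.1 - k))
          (mul_nonneg (by positivity) (wmD_nonneg _)), mul_assoc]
        exact mul_le_mul_of_nonneg_right (h k hk) (mul_nonneg (by positivity) (wmD_nonneg _))
    _ ≤ _ := by
        rw [← Finset.mul_sum]
        exact mul_le_of_le_one_right (by positivity) (wm_sum_tent _ _)

lemma wm_summable (ω : WmI → ℝ) (C : ℝ) (hC : 0 ≤ C)
    (h : ∀ m, ∀ k ∈ Finset.range (2^m), |ω ⟨m+1, k⟩| ≤ C * (13/10)^m) :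
    ∃ l, Tendsto (fun N => wmS N ω) atTop (𝓝 l) := by
  have hs : Summable (fun m => wmL (m+1) ω) := by
    have hlt : (13/10 : ℝ) * √(1/2) < 1 := by
      have : √(1/2 : ℝ) < 10/13 := by
        rw [Real.sqrt_lt' (by norm_num)]; norm_num
      linarith
    refine Summable.of_norm_bounded (g := fun m => C * ((13/10 : ℝ) * √(1/2))^m)
      ((summable_geometric_of_lt_one (by positivity) hlt).mul_left C) fun m => ?_
    rw [mul_pow, ← mul_assoc]
    exact wmL_norm m ω _ (by positivity) (h m)
  have hs' : Summable (fun m => wmL m ω) := (summable_nat_add_iff 1).1 hs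
  exact ⟨_, hs'.hasSum.tendsto_sum_nat⟩

open ProbabilityTheory in
lemma wm_ae : ∀ᵐ ω ∂(wmP WmI), ∃ l, Tendsto (fun N => wmS N ω) atTop (𝓝 l) := by
  let f : WmI → (WmI → ℝ) → ℝ≥0∞ := fun i ω => ENNReal.ofReal ((ω i) ^ 4)
  have hf : ∀ i, Measurable (f i) := fun i => by fun_prop
  let r : ℝ≥0∞ := ENNReal.ofReal ((10/13)^4)
  let F : (WmI → ℝ) → ℝ≥0∞ := fun ω => ∑' m : ℕ, r ^ m * ∑ k ∈ Finset.range (2^m), f ⟨m+1, k⟩ ω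
  let K : ℝ≥0∞ := ∫⁻ x, ENNReal.ofReal (x ^ 4) ∂(gaussianReal 0 1)
  have hK : K ≠ ∞ := by
    have h4 : MemLp id 4 (gaussianReal 0 1) := memLp_id_gaussianReal' 4 (by simp)
    have h5 : Integrable (fun x : ℝ => x ^ 4) (gaussianReal 0 1) := by
      have := h4.integrable_norm_pow (p := 4) (by norm_num)
      refine this.congr (Eventually.of_forall fun x => ?_)
      simp only [id, Real.norm_eq_abs]
      exact Even.pow_abs (by decide) x
    exact h5.lintegral_lt_top.ne
  have hfK : ∀ i, ∫⁻ ω, f i ω ∂(wmP WmI) = K := by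
    intro i
    simp only [K, f]
    rw [← wm_map_eval WmI i, lintegral_map (by fun_prop) (by fun_prop)]
  have hFm : Measurable F := by fun_prop
  have hF : ∫⁻ ω, F ω ∂(wmP WmI) ≠ ∞ := by
    simp only [F]
    rw [lintegral_tsum (fun m => by fun_prop)]
    have : ∀ m : ℕ, ∫⁻ ω, r ^ m * ∑ k ∈ Finset.range (2^m), f ⟨m+1, k⟩ ω ∂(wmP WmI)
        = (ENNReal.ofReal (2 * (10/13)^4)) ^ m * K := by
      intro m
      rw [lintegral_const_mul _ (by fun_prop), lintegral_finsetSum _ (fun k _ => hf _)]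
      simp only [hfK, Finset.sum_const, Finset.card_range, nsmul_eq_mul]
      rw [ENNReal.ofReal_mul (by norm_num), mul_pow]
      simp [r]
      ring
    simp only [this]
    rw [ENNReal.tsum_mul_right, ENNReal.tsum_geometric]
    refine ENNReal.mul_ne_top ?_ hK
    rw [ENNReal.inv_ne_top]
    refine (tsub_pos_of_lt ?_).ne'
    rw [ENNReal.ofReal_lt_one]; norm_num
  filter_upwards [ae_lt_top hFm hF] with ω hω
  refine wm_summable ω (1 + (F ω).toReal) (by positivity) fun m k hk => ?_
  have h1 : r ^ m * f ⟨m+1, k⟩ ω ≤ F ω := by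
    refine le_trans ?_ (ENNReal.le_tsum m)
    gcongr
    exact Finset.single_le_sum (f := fun k => f ⟨m+1, k⟩ ω) (fun _ _ => zero_le) hk
  have h2 := ENNReal.toReal_mono hω.ne h1
  simp only [r, f] at h2
  rw [← ENNReal.ofReal_pow (by positivity), ← ENNReal.ofReal_mul (by positivity),
    ENNReal.toReal_ofReal (by positivity)] at h2
  set x := ω ⟨m+1, k⟩
  have h3 : ((10/13:ℝ)^m * |x|)^4 ≤ (F ω).toReal := by
    refine le_trans (le_of_eq ?_) h2
    rw [mul_pow, Even.pow_abs (by decide) x, ← pow_mul, ← pow_mul, mul_comm m 4]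
  have h4 : (10/13:ℝ)^m * |x| ≤ 1 + (F ω).toReal := by
    have hy : 0 ≤ (10/13:ℝ)^m * |x| := by positivity
    have hF0 : 0 ≤ (F ω).toReal := ENNReal.toReal_nonneg
    generalize (10/13:ℝ)^m * |x| = y at *
    rcases le_total y 1 with h | h
    · linarith
    · have := le_self_pow₀ h (n := 4) (by norm_num)
      linarith
  calc |x| = ((10/13:ℝ)^m * |x|) * (13/10)^m := by
        rw [mul_right_comm, ← mul_pow]; norm_num
    _ ≤ _ := by gcongr

lemma wm_limit : ∃ F : (WmI → ℝ) → Cz, Measurable F ∧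
    ∀ᵐ ω ∂(wmP WmI), ∀ t, Tendsto (fun N => wmS N ω t) atTop
      (𝓝 ((F ω : C(Set.Icc (0:ℝ) 1, ℝ)) t)) := by
  let T : ℕ → (WmI → ℝ) → Cz := fun N ω => ⟨wmS N ω, wmS_zero N ω⟩
  have hT : ∀ N, Measurable (T N) := fun N =>
    ((wmS_cont N).subtype_mk _).measurable
  have hae : ∀ᵐ ω ∂(wmP WmI), ∃ l, Tendsto (fun N => T N ω) atTop (𝓝 l) := by
    filter_upwards [wm_ae] with ω ⟨l, hl⟩
    have hl0 : l ⟨0, ⟨le_refl 0, zero_le_one⟩⟩ = 0 := by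
      have h1 := ((continuous_eval_const (F := C(Set.Icc (0:ℝ) 1, ℝ))
        (⟨0, ⟨le_refl 0, zero_le_one⟩⟩ : Set.Icc (0:ℝ) 1)).tendsto l).comp hl
      refine tendsto_nhds_unique h1 ?_
      simp only [Function.comp_def, wmS_zero]
      exact tendsto_const_nhds
    exact ⟨⟨l, hl0⟩, tendsto_subtype_rng.2 hl⟩
  obtain ⟨F, hF, h⟩ := measurable_limit_of_tendsto_metrizable_ae
    (fun N => (hT N).aemeasurable) hae
  refine ⟨F, hF, ?_⟩
  filter_upwards [h] with ω hω t
  have h1 := tendsto_subtype_rng.1 hω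
  exact ((continuous_eval_const (F := C(Set.Icc (0:ℝ) 1, ℝ)) t).tendsto _).comp h1

lemma wm_cov (s t : Set.Icc (0:ℝ) 1) :
    Tendsto (fun N => ∑ i ∈ (Finset.range N).sigma (fun m => Finset.range (2^(m-1))),
      wmG i.1 i.2 s * wmG i.1 i.2 t) atTop (𝓝 (min s.1 t.1)) := by
  rw [← tendsto_add_atTop_iff_nat 1]
  have h := (wmB_tendsto s t).add_const (s.1 * t.1)
  have h2 : wmB s t + s.1 * t.1 = min s.1 t.1 := by
    have c2 : ∀ x : ℝ, 0 ≤ x → x ≤ 1 → max 0 (min x 1) = x := fun x hx hx' => by grind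
    unfold wmB
    rw [c2 _ s.2.1 s.2.2, c2 _ t.2.1 t.2.2]; ring
  rw [h2] at h
  refine h.congr fun N => ?_
  rw [Finset.sum_sigma, Finset.sum_range_succ']
  congr 1
  · refine Finset.sum_congr rfl fun m _ => Finset.sum_congr rfl fun k _ => ?_
    simp only [wmG, ContinuousMap.coe_mk]
    have : (1/2:ℝ)^m = √(1/2)^m * √(1/2)^m := by
      rw [← mul_pow, Real.mul_self_sqrt (by norm_num)]
    rw [this]; ring
  · simp [wmG]

lemma wm_main (F : (WmI → ℝ) → Cz) (hF : Measurable F)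
    (hlim : ∀ᵐ ω ∂(wmP WmI), ∀ t, Tendsto (fun N => wmS N ω t) atTop
      (𝓝 ((F ω : C(Set.Icc (0:ℝ) 1, ℝ)) t)))
    (p : ℕ) (u : Fin p → Set.Icc (0:ℝ) 1) (A : Matrix (Fin p) (Fin p) ℝ)
    (hA : A * Aᵀ = Matrix.of fun j r => min (u j).1 (u r).1) :
    (wmP WmI).map (fun ω (j : Fin p) => (F ω : C(Set.Icc (0:ℝ) 1, ℝ)) (u j)) =
      (wmP (Fin p)).map (fun x => A.mulVec x) := by
  have hV : Measurable (fun ω (j : Fin p) => (F ω : C(Set.Icc (0:ℝ) 1, ℝ)) (u j)) := by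
    refine measurable_pi_lambda _ fun j => ?_
    have : Continuous (fun x : Cz => (x : C(Set.Icc (0:ℝ) 1, ℝ)) (u j)) :=
      (continuous_eval_const (F := C(Set.Icc (0:ℝ) 1, ℝ)) (u j)).comp continuous_subtype_val
    exact this.measurable.comp hF
  have hAm : Measurable (fun x : Fin p → ℝ => A.mulVec x) := by
    have : Continuous (fun x : Fin p → ℝ => A.mulVec x) := by fun_prop
    exact this.measurable
  have := Measure.isProbabilityMeasure_map (μ := wmP WmI) hV.aemeasurable
  have := Measure.isProbabilityMeasure_map (μ := wmP (Fin p)) hAm.aemeasurable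
  apply Measure.ext_of_charFunDual
  ext L
  obtain ⟨ξ, hξ⟩ : ∃ ξ : Fin p → ℝ, ∀ x, L x = ∑ j, ξ j * x j := by
    refine ⟨fun j => L (Pi.single j 1), fun x => ?_⟩
    conv_lhs => rw [pi_eq_sum_univ' x]
    simp [map_sum, mul_comm]
  have hLm : Continuous (fun x => Complex.exp ((L x : ℂ) * Complex.I)) := by fun_prop
  rw [charFunDual_apply, charFunDual_apply, integral_map hV.aemeasurable hLm.aestronglyMeasurable,
    integral_map hAm.aemeasurable hLm.aestronglyMeasurable]
  -- right-hand side
  have hR : ∫ x, Complex.exp ((L (A.mulVec x) : ℂ) * Complex.I) ∂(wmP (Fin p)) =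
      Complex.exp (((-(∑ j, ∑ r, ξ j * ξ r * min (u j).1 (u r).1) / 2 : ℝ) : ℂ)) := by
    have h := wm_charFun (Fin p) Finset.univ (fun i => ∑ j, ξ j * A j i)
    have e1 : ∀ x : Fin p → ℝ, ∑ i, x i * ∑ j, ξ j * A j i = L (A.mulVec x) := by
      intro x
      rw [hξ]
      simp only [Matrix.mulVec, dotProduct, Finset.mul_sum]
      rw [Finset.sum_comm]
      exact Finset.sum_congr rfl fun _ _ => Finset.sum_congr rfl fun _ _ => by ring
    have e2 : ∑ i, (∑ j, ξ j * A j i)^2 = ∑ j, ∑ r, ξ j * ξ r * min (u j).1 (u r).1 := by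
      have hA' : ∀ j r, min (u j).1 (u r).1 = ∑ i, A j i * A r i := by
        intro j r
        have := congrFun (congrFun hA j) r
        rw [Matrix.mul_apply] at this
        simpa using this.symm
      simp only [pow_two, Finset.sum_mul_sum]
      simp only [hA', Finset.mul_sum]
      rw [Finset.sum_comm]
      refine Finset.sum_congr rfl fun j _ => ?_
      rw [Finset.sum_comm]
      exact Finset.sum_congr rfl fun _ _ => Finset.sum_congr rfl fun _ _ => by ring
    rw [e2] at h
    rw [← h]
    simp only [e1]
  rw [hR]
  let VN : ℕ → (WmI → ℝ) → (Fin p → ℝ) := fun N ω j => wmS N ω (u j)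
  have hVN : ∀ N, Continuous (VN N) := fun N => continuous_pi fun j =>
    (continuous_eval_const (F := C(Set.Icc (0:ℝ) 1, ℝ)) (u j)).comp (wmS_cont N)
  have t1 : Tendsto (fun N => ∫ ω, Complex.exp ((L (VN N ω) : ℂ) * Complex.I) ∂(wmP WmI)) atTop
      (𝓝 (∫ ω, Complex.exp ((L (fun j => (F ω : C(Set.Icc (0:ℝ) 1, ℝ)) (u j)) : ℂ) * Complex.I)
        ∂(wmP WmI))) := by
    refine tendsto_integral_of_dominated_convergence (fun _ => 1)
      (fun N => (hLm.comp (hVN N)).aestronglyMeasurable) (integrable_const _)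
      (fun N => Eventually.of_forall fun ω => ?_) ?_
    · rw [Complex.norm_exp_ofReal_mul_I]
    · filter_upwards [hlim] with ω hω
      exact (hLm.tendsto _).comp (tendsto_pi_nhds.2 fun j => hω (u j))
  refine tendsto_nhds_unique t1 ?_
  let I : ℕ → Finset WmI := fun N => (Finset.range N).sigma (fun m => Finset.range (2^(m-1)))
  have t2 : Tendsto (fun N => ∑ i ∈ I N, (∑ j, ξ j * wmG i.1 i.2 (u j))^2) atTop
      (𝓝 (∑ j, ∑ r, ξ j * ξ r * min (u j).1 (u r).1)) := by
    have h : Tendsto (fun N => ∑ j, ∑ r, ξ j * ξ r * ∑ i ∈ I N,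
        wmG i.1 i.2 (u j) * wmG i.1 i.2 (u r)) atTop
        (𝓝 (∑ j, ∑ r, ξ j * ξ r * min (u j).1 (u r).1)) :=
      tendsto_finsetSum _ fun j _ => tendsto_finsetSum _ fun r _ =>
        (wm_cov (u j) (u r)).const_mul _
    refine h.congr fun N => ?_
    simp only [pow_two, Finset.sum_mul_sum]
    simp only [Finset.mul_sum]
    symm
    rw [Finset.sum_comm]
    refine Finset.sum_congr rfl fun j _ => ?_
    rw [Finset.sum_comm]
    exact Finset.sum_congr rfl fun _ _ => Finset.sum_congr rfl fun _ _ => by ring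
  have hc : Continuous (fun x : ℝ => Complex.exp (((-x / 2 : ℝ) : ℂ))) := by fun_prop
  refine ((hc.tendsto _).comp t2).congr fun N => ?_
  simp only [Function.comp]
  rw [← wm_charFun]
  congr 1
  ext ω
  have : ∑ i ∈ I N, ω i * ∑ j, ξ j * wmG i.1 i.2 (u j) = L (VN N ω) := by
    rw [hξ]
    simp only [VN, wmS_apply, Finset.mul_sum]
    rw [Finset.sum_comm]
    exact Finset.sum_congr rfl fun _ _ => Finset.sum_congr rfl fun _ _ => by ring
  rw [this]

/-- existence of the Wiener measure: a Borel probability measure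
`W` on `C` whose finite dimensional distributions at `0 < u_1 < … < u_p ≤ 1`
are centered Gaussian with covariance matrix `(min (u j) (u r))_{j,r}`. -/
theorem stmt16 :
    ∃ W : Measure Cz, IsProbabilityMeasure W ∧
      ∀ (p : ℕ), 1 ≤ p → ∀ u : Fin p → ℝ, StrictMono u →
        ∀ hu : ∀ j, u j ∈ Set.Ioc (0:ℝ) 1,
        W.map (fun (x : Cz) (j : Fin p) =>
            (x : C(Set.Icc (0:ℝ) 1, ℝ)) ⟨u j, Set.Ioc_subset_Icc_self (hu j)⟩) =
          gauss p (Matrix.of fun j r => min (u j) (u r)) := by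
  obtain ⟨F, hF, hlim⟩ := wm_limit
  refine ⟨(wmP WmI).map F, Measure.isProbabilityMeasure_map hF.aemeasurable, ?_⟩
  intro p _ u hu hu01
  obtain ⟨A, hdet, hA⟩ := wm_factor p u hu (fun j => (hu01 j).1)
  have hV : Measurable (fun (x : Cz) (j : Fin p) =>
      (x : C(Set.Icc (0:ℝ) 1, ℝ)) ⟨u j, Set.Ioc_subset_Icc_self (hu01 j)⟩) := by
    refine measurable_pi_lambda _ fun j => ?_
    have : Continuous (fun x : Cz =>
        (x : C(Set.Icc (0:ℝ) 1, ℝ)) ⟨u j, Set.Ioc_subset_Icc_self (hu01 j)⟩) :=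
      (continuous_eval_const (F := C(Set.Icc (0:ℝ) 1, ℝ)) _).comp continuous_subtype_val
    exact this.measurable
  rw [Measure.map_map hV hF, ← hA, wm_gauss_map p A hdet]
  have h := wm_main F hF hlim p (fun j => ⟨u j, Set.Ioc_subset_Icc_self (hu01 j)⟩) A hA
  have e : wmP (Fin p) = Measure.pi (fun _ : Fin p => ProbabilityTheory.gaussianReal 0 1) :=
    Measure.infinitePi_eq_pi _
  rw [e] at h
  exact h

end
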